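/- arXiv:1712.09256 — 3 statements merged into one kernel-verified Lean document; each statement's English description precedes it below -/
import Mathlib

section
/- Let 0 < λ < 1, and let φ : ℝ → ℝ be a smooth, bounded, strictly positive function with |φ''(x)| ≤ λ φ(x) for all x ∈ ℝ. Let f : ℝ → ℝ be a Schwartz function and set u := f − f''. Then for all real numbers d₁, d₂, d₃ > 0, writing d̃ := min(d₁, d₂, d₃) and D̃ := max(d₁, d₂, d₃), one has (d̃/2) ∫ φ (u')² ≤ ∫ φ (d₁ (f')² + d₂ (f'')² + d₃ (f''')²) ≤ (D̃/(1 − λ)) ∫ φ (u')². -/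
open MeasureTheory SchwartzMap

/-!
Write `a = f'`, `b = f''`, `c = f'''`, so that `u' = a - c`. The lower bound is pointwise:
`(a - c)² ≤ 2 (a² + c²)`. For the upper bound, the function `G = 2 φ a b - φ' a²` has derivative
`2 φ b² + 2 φ a c - φ'' a²`, whose integral vanishes because `G` and `G'` are integrable. Hence
`∫ φ (a - c)² = ∫ (φ (a² + 2 b² + c²) - φ'' a²) ≥ (1 - λ) ∫ φ (a² + b² + c²)`.

Integrability of `G` requires `φ'` to be bounded, which follows from the bounds on `φ` and `φ''`
(`abs_deriv_le_of_bounds`).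
-/

/-- Landau-type bound: if `0 < φ ≤ C` and `|φ''| ≤ K`, then `|φ'| ≤ C + K`. Some point
`y ∈ (x, x + 1)` has `φ' y = φ (x + 1) - φ x`, and `φ'` varies by at most `K` between `x` and `y`. -/
lemma abs_deriv_le_of_bounds {φ : ℝ → ℝ} {C K : ℝ} (h1 : Differentiable ℝ φ)
    (h2 : Differentiable ℝ (deriv φ)) (hpos : ∀ x, 0 < φ x) (hC : ∀ x, φ x ≤ C)
    (hK : ∀ x, |deriv (deriv φ) x| ≤ K) (x : ℝ) : |deriv φ x| ≤ C + K := by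
  obtain ⟨y, hy, hy'⟩ := exists_deriv_eq_slope φ (show x < x + 1 by linarith)
    h1.continuous.continuousOn h1.differentiableOn
  obtain ⟨z, hz, hz'⟩ := exists_deriv_eq_slope (deriv φ) hy.1
    h2.continuous.continuousOn h2.differentiableOn
  have hyx : 0 < y - x := by linarith [hy.1]
  have hyx1 : y - x ≤ 1 := by linarith [hy.2]
  rw [eq_div_iff hyx.ne'] at hz'
  rw [add_sub_cancel_left, div_one] at hy'
  have hvar : |deriv φ y - deriv φ x| ≤ K := by
    rw [← hz', abs_mul, abs_of_pos hyx]
    nlinarith [hK z, abs_nonneg (deriv (deriv φ) z)]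
  rw [abs_le] at hvar ⊢
  have := hpos x
  have := hpos (x + 1)
  have := hC x
  have := hC (x + 1)
  constructor <;> linarith [hvar.1, hvar.2]

lemma integrable_bdd_mul_schwartz {g : ℝ → ℝ} {C : ℝ} (hg : Continuous g)
    (hC : ∀ x, |g x| ≤ C) (a b : 𝓢(ℝ, ℝ)) :
    Integrable (fun x => g x * (a x * b x)) := by
  have hab : Integrable (fun x => a x * b x) :=
    (a.memLp 2 volume).integrable_mul (b.memLp 2 volume)
  exact hab.bdd_mul (c := C) hg.aestronglyMeasurable (Filter.Eventually.of_forall hC)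

/-- Equivalence of weighted H¹-seminorms between `u = f - f''` and its canonical
variable `f`:
`(d̃/2) ∫ φ u'² ≤ ∫ φ (d₁ f'² + d₂ f''² + d₃ f'''²) ≤ (D̃/(1-λ)) ∫ φ u'²`. -/
theorem stmt_9 (lam : ℝ) (hlam0 : 0 < lam) (hlam1 : lam < 1)
    (φ : ℝ → ℝ) (hφs : ContDiff ℝ (⊤ : ℕ∞) φ) (hφbd : ∃ C : ℝ, ∀ x, φ x ≤ C)
    (hφpos : ∀ x, 0 < φ x)
    (hφ'' : ∀ x, |deriv (deriv φ) x| ≤ lam * φ x)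
    (f : 𝓢(ℝ, ℝ)) (u : ℝ → ℝ) (hu : ∀ x, u x = f x - deriv (deriv (f : ℝ → ℝ)) x)
    (d₁ d₂ d₃ : ℝ) (hd₁ : 0 < d₁) (hd₂ : 0 < d₂) (hd₃ : 0 < d₃) :
    (min (min d₁ d₂) d₃ / 2) * (∫ x : ℝ, φ x * (deriv u x)^2)
      ≤ (∫ x : ℝ, φ x * (d₁*(deriv (f : ℝ → ℝ) x)^2
          + d₂*(deriv (deriv (f : ℝ → ℝ)) x)^2
          + d₃*(deriv (deriv (deriv (f : ℝ → ℝ))) x)^2))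
    ∧ (∫ x : ℝ, φ x * (d₁*(deriv (f : ℝ → ℝ) x)^2
          + d₂*(deriv (deriv (f : ℝ → ℝ)) x)^2
          + d₃*(deriv (deriv (deriv (f : ℝ → ℝ))) x)^2))
      ≤ (max (max d₁ d₂) d₃ / (1 - lam)) * ∫ x : ℝ, φ x * (deriv u x)^2 := by
  obtain ⟨C, hC⟩ := hφbd
  have hd1 : Differentiable ℝ φ := hφs.differentiable (by simp)
  have hφs' : ContDiff ℝ (⊤ : ℕ∞) (deriv φ) := (contDiff_infty_iff_deriv.1 hφs).2
  have hd2 : Differentiable ℝ (deriv φ) := hφs'.differentiable (by simp)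
  have hc3 : Continuous (deriv (deriv φ)) := (contDiff_infty_iff_deriv.1 hφs').2.continuous
  have hB0 : ∀ x, |φ x| ≤ C := fun x => by rw [abs_of_pos (hφpos x)]; exact hC x
  have hB2 : ∀ x, |deriv (deriv φ) x| ≤ lam * C := fun x =>
    (hφ'' x).trans (mul_le_mul_of_nonneg_left (hC x) hlam0.le)
  have hB1 := abs_deriv_le_of_bounds hd1 hd2 hφpos hC hB2
  obtain ⟨a, ha⟩ : ∃ a : 𝓢(ℝ, ℝ), (a : ℝ → ℝ) = deriv f :=
    ⟨derivCLM ℝ ℝ f, funext fun x => derivCLM_apply ℝ f x⟩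
  obtain ⟨b, hb⟩ : ∃ b : 𝓢(ℝ, ℝ), (b : ℝ → ℝ) = deriv a :=
    ⟨derivCLM ℝ ℝ a, funext fun x => derivCLM_apply ℝ a x⟩
  obtain ⟨c, hc⟩ : ∃ c : 𝓢(ℝ, ℝ), (c : ℝ → ℝ) = deriv b :=
    ⟨derivCLM ℝ ℝ b, funext fun x => derivCLM_apply ℝ b x⟩
  have hu' : deriv u = fun x => a x - c x := by
    have hu2 : u = fun x => f x - b x := by
      funext x; rw [hu x, hb, ha]
    funext x
    rw [hu2, deriv_fun_sub f.differentiableAt b.differentiableAt, ha, hc]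
  rw [hu', ← ha, ← hb, ← hc]
  have I0 := integrable_bdd_mul_schwartz hd1.continuous hB0
  have I1 := integrable_bdd_mul_schwartz hd2.continuous hB1
  have I2 := integrable_bdd_mul_schwartz hc3 hB2
  have hIu : Integrable (fun x => φ x * (a x - c x) ^ 2) := by
    refine (((I0 a a).add (I0 c c)).sub ((I0 a c).const_mul 2)).congr
      (Filter.Eventually.of_forall fun x => ?_)
    simp only [Pi.add_apply, Pi.sub_apply]
    ring
  have hId : Integrable (fun x => φ x * (d₁ * a x ^ 2 + d₂ * b x ^ 2 + d₃ * c x ^ 2)) := by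
    refine ((((I0 a a).const_mul d₁).add ((I0 b b).const_mul d₂)).add
      ((I0 c c).const_mul d₃)).congr (Filter.Eventually.of_forall fun x => ?_)
    simp only [Pi.add_apply]
    ring
  constructor
  · rw [← integral_const_mul]
    refine integral_mono (hIu.const_mul _) hId fun x => ?_
    have hm1 : min (min d₁ d₂) d₃ ≤ d₁ := (min_le_left _ _).trans (min_le_left _ _)
    have hm3 : min (min d₁ d₂) d₃ ≤ d₃ := min_le_right _ _
    have hm0 : 0 < min (min d₁ d₂) d₃ := lt_min (lt_min hd₁ hd₂) hd₃
    generalize min (min d₁ d₂) d₃ = m at *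
    have key : m / 2 * (a x - c x) ^ 2 ≤ d₁ * a x ^ 2 + d₂ * b x ^ 2 + d₃ * c x ^ 2 := by
      nlinarith [mul_nonneg hm0.le (sq_nonneg (a x + c x)), mul_nonneg hd₂.le (sq_nonneg (b x)),
        mul_le_mul_of_nonneg_right hm1 (sq_nonneg (a x)),
        mul_le_mul_of_nonneg_right hm3 (sq_nonneg (c x))]
    calc m / 2 * (φ x * (a x - c x) ^ 2) = φ x * (m / 2 * (a x - c x) ^ 2) := by ring
      _ ≤ _ := mul_le_mul_of_nonneg_left key (hφpos x).le
  · have hM1 : d₁ ≤ max (max d₁ d₂) d₃ := (le_max_left _ _).trans (le_max_left _ _)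
    have hM2 : d₂ ≤ max (max d₁ d₂) d₃ := (le_max_right _ _).trans (le_max_left _ _)
    have hM3 : d₃ ≤ max (max d₁ d₂) d₃ := le_max_right _ _
    generalize max (max d₁ d₂) d₃ = M at *
    have hM0 : 0 < M := hd₁.trans_le hM1
    have h1l : 0 < 1 - lam := by linarith
    have hIG : Integrable (fun x => 2 * (φ x * (a x * b x)) - deriv φ x * (a x * a x)) :=
      ((I0 a b).const_mul 2).sub (I1 a a)
    have hIG' : Integrable (fun x => 2 * (φ x * (b x * b x)) + 2 * (φ x * (a x * c x))
        - deriv (deriv φ) x * (a x * a x)) :=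
      (((I0 b b).const_mul 2).add ((I0 a c).const_mul 2)).sub (I2 a a)
    have hG : ∀ x, HasDerivAt (fun x => 2 * (φ x * (a x * b x)) - deriv φ x * (a x * a x))
        (2 * (φ x * (b x * b x)) + 2 * (φ x * (a x * c x))
          - deriv (deriv φ) x * (a x * a x)) x := by
      intro x
      have h0 := (hd1 x).hasDerivAt
      have h1 := (hd2 x).hasDerivAt
      have h2 : HasDerivAt a (b x) x := by rw [hb]; exact a.differentiableAt.hasDerivAt
      have h3 : HasDerivAt b (c x) x := by rw [hc]; exact b.differentiableAt.hasDerivAt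
      refine (((h0.fun_mul (h2.fun_mul h3)).const_mul 2).fun_sub
        (h1.fun_mul (h2.fun_mul h2))).congr_deriv ?_
      ring
    have hzero := integral_eq_zero_of_hasDerivAt_of_integrable hG hIG' hIG
    have hadd : ∫ x, φ x * (a x - c x) ^ 2 = ∫ x, (φ x * (a x - c x) ^ 2
        + (2 * (φ x * (b x * b x)) + 2 * (φ x * (a x * c x))
          - deriv (deriv φ) x * (a x * a x))) := by
      rw [integral_add hIu hIG', hzero, add_zero]
    rw [hadd, ← integral_const_mul]
    refine integral_mono hId ((hIu.add hIG').const_mul _) fun x => ?_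
    have hp := hφpos x
    have hupper : φ x * (d₁ * a x ^ 2 + d₂ * b x ^ 2 + d₃ * c x ^ 2)
        ≤ M * (φ x * (a x ^ 2 + b x ^ 2 + c x ^ 2)) := by
      rw [mul_left_comm]
      refine mul_le_mul_of_nonneg_left ?_ hp.le
      nlinarith [mul_le_mul_of_nonneg_right hM1 (sq_nonneg (a x)),
        mul_le_mul_of_nonneg_right hM2 (sq_nonneg (b x)),
        mul_le_mul_of_nonneg_right hM3 (sq_nonneg (c x))]
    have hcoer : (1 - lam) * (φ x * (a x ^ 2 + b x ^ 2 + c x ^ 2)) ≤ φ x * (a x - c x) ^ 2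
        + (2 * (φ x * (b x * b x)) + 2 * (φ x * (a x * c x))
          - deriv (deriv φ) x * (a x * a x)) := by
      have e1 := mul_le_mul_of_nonneg_right ((le_abs_self _).trans (hφ'' x)) (sq_nonneg (a x))
      have e2 : 0 ≤ (1 + lam) * (φ x * b x ^ 2) := by positivity
      have e3 : 0 ≤ lam * (φ x * c x ^ 2) := by positivity
      linarith
    calc _ ≤ M * (φ x * (a x ^ 2 + b x ^ 2 + c x ^ 2)) := hupper
      _ = M / (1 - lam) * ((1 - lam) * (φ x * (a x ^ 2 + b x ^ 2 + c x ^ 2))) := by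
        field_simp
      _ ≤ _ := mul_le_mul_of_nonneg_left hcoer (by positivity)
end

section
/- Let a, c ∈ ℝ and let u, η, p, q, U, N, P, Q be Schwartz functions on ℝ satisfying p − p'' = −(a u''' + u' + (uη)'), q − q'' = −(c η''' + η' + u u'), U − U'' = u, N − N'' = η, P − P'' = uη, and Q − Q'' = u². Let φ : ℝ → ℝ be a smooth function all of whose derivatives (including φ itself) are bounded. Then ∫ φ' (q η' + u p') = −(1 + c) ∫ φ' η² + c ∫ φ' (η')² + (1 + a) ∫ φ' u² − a ∫ φ' (u')² + (1 + c) ∫ φ' η N − (1 + a) ∫ φ' u U + (1 + c) ∫ φ'' η N' + (a/2) ∫ φ''' u² − ∫ φ' u P + (1/2) ∫ φ' η Q + (1/2) ∫ φ' u² η + (1/2) ∫ φ'' η Q'. -/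
/-!
The elliptic operator `1 - D²` is injective on Schwartz functions: if `F = F''`, then
`(F F')' = F'² + F²`, and integrating over `ℝ` gives `F = 0`. Applied to the two equations of the
system, this gives closed forms for the time derivatives in terms of canonical variables:
`p = a u' - (1 + a) U' - P'` and `q = c η' - (1 + c) N' - Q' / 2`.

Substituting these, the virial functional becomes a combination of integrals `∫ ψ f g` with `ψ` a
derivative of `φ` and `f, g` Schwartz. These are treated as the values of a symmetric bilinear form
`weightedForm ψ`, for which integration by parts reads
`⟨f, g'⟩_ψ = -⟨f, g⟩_ψ' - ⟨f', g⟩_ψ`. Moving one derivative off `η` and off `u'`, and using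
`U'' = U - u`, `N'' = N - η`, `P'' = P - u η`, `Q'' = Q - u²`, yields the identity.
-/

open MeasureTheory SchwartzMap
open scoped BoundedContinuousFunction

namespace Virial

/-- The derivative, as a continuous linear endomorphism of the real Schwartz space on `ℝ`. -/
noncomputable abbrev D : 𝓢(ℝ, ℝ) →L[ℝ] 𝓢(ℝ, ℝ) := derivCLM ℝ ℝ

lemma deriv_eq_D (f : 𝓢(ℝ, ℝ)) : deriv (f : ℝ → ℝ) = D f := by
  ext x; rw [derivCLM_apply]

lemma hasDerivAt_D (f : 𝓢(ℝ, ℝ)) (x : ℝ) : HasDerivAt f (D f x) x := by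
  rw [derivCLM_apply]; exact f.differentiableAt.hasDerivAt

lemma integrable_bdd_mul (ψ : ℝ →ᵇ ℝ) (f g : 𝓢(ℝ, ℝ)) :
    Integrable fun x => ψ x * (f x * g x) := by
  have h : Integrable fun x => f x * g x :=
    g.integrable.bdd_mul (c := ‖f.toBoundedContinuousFunction‖) f.continuous.aestronglyMeasurable
      (.of_forall fun x => f.toBoundedContinuousFunction.norm_coe_le_norm x)
  exact h.bdd_mul (c := ‖ψ‖) ψ.continuous.aestronglyMeasurable
    (.of_forall ψ.norm_coe_le_norm)

lemma eq_zero_of_sub_D_D {F : 𝓢(ℝ, ℝ)} (h : F - D (D F) = 0) : F = 0 := by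
  have h1 (f g : 𝓢(ℝ, ℝ)) : Integrable fun x => f x * g x := by
    simpa using integrable_bdd_mul 1 f g
  have h0 : D (D F) = F := (sub_eq_zero.mp h).symm
  have hint : Integrable fun x => D F x * D F x + F x * F x := (h1 _ _).add (h1 _ _)
  have hi : ∫ x, (D F x * D F x + F x * F x) = 0 := by
    refine integral_eq_zero_of_hasDerivAt_of_integrable (f := fun x => F x * D F x) (fun x => ?_)
      hint (h1 _ _)
    have := (hasDerivAt_D F x).mul (hasDerivAt_D (D F) x)
    rwa [h0] at this
  have hnn : 0 ≤ fun x => D F x * D F x + F x * F x := fun x =>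
    add_nonneg (mul_self_nonneg _) (mul_self_nonneg _)
  have hz := (Continuous.ae_eq_iff_eq volume (by fun_prop) continuous_zero).mp
    ((integral_eq_zero_iff_of_nonneg hnn hint).mp hi)
  ext x
  have hx := congrFun hz x
  simp only [Pi.zero_apply] at hx
  rw [zero_apply]
  nlinarith [sq_nonneg (D F x), sq_nonneg (F x)]

/-- The operator `1 - D²` is injective on Schwartz functions. -/
lemma eq_of_sub_D_D {F G : 𝓢(ℝ, ℝ)} (h : F - D (D F) = G - D (D G)) : F = G := by
  refine sub_eq_zero.mp (eq_zero_of_sub_D_D ?_)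
  rw [map_sub, map_sub, sub_sub_sub_comm, h, sub_self]

/-- The weighted form `(f, g) ↦ ∫ ψ f g`, linear in the Schwartz function `g`. It is also linear
in `f`, by the symmetry `weightedForm_comm`. -/
noncomputable def weightedForm (ψ : ℝ →ᵇ ℝ) (f : 𝓢(ℝ, ℝ)) : 𝓢(ℝ, ℝ) →ₗ[ℝ] ℝ where
  toFun g := ∫ x, ψ x * (f x * g x)
  map_add' g h := by
    rw [← integral_add (integrable_bdd_mul ψ f g) (integrable_bdd_mul ψ f h)]
    congr 1 with x
    rw [add_apply]; ring
  map_smul' r g := by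
    rw [RingHom.id_apply, smul_eq_mul, ← integral_const_mul]
    congr 1 with x
    rw [smul_apply, smul_eq_mul]; ring

lemma weightedForm_apply (ψ : ℝ →ᵇ ℝ) (f g : 𝓢(ℝ, ℝ)) :
    weightedForm ψ f g = ∫ x, ψ x * (f x * g x) := rfl

lemma weightedForm_comm (ψ : ℝ →ᵇ ℝ) (f g : 𝓢(ℝ, ℝ)) :
    weightedForm ψ f g = weightedForm ψ g f := by
  simp only [weightedForm_apply, mul_comm (f _)]

/-- Integration by parts for the weighted form. -/
lemma weightedForm_D {ψ ψ' : ℝ →ᵇ ℝ} (hψ : ∀ x, HasDerivAt ψ (ψ' x) x) (f g : 𝓢(ℝ, ℝ)) :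
    weightedForm ψ f (D g) = -weightedForm ψ' f g - weightedForm ψ (D f) g := by
  have hA := integrable_bdd_mul ψ' f g
  have hB := integrable_bdd_mul ψ (D f) g
  have hC := integrable_bdd_mul ψ f (D g)
  have hBC : Integrable fun x => ψ x * (D f x * g x) + ψ x * (f x * D g x) := hB.add hC
  have h := integral_eq_zero_of_hasDerivAt_of_integrable
    (f := fun x => ψ x * (f x * g x))
    (f' := fun x => ψ' x * (f x * g x) + (ψ x * (D f x * g x) + ψ x * (f x * D g x)))
    (fun x => by
      have := (hψ x).mul ((hasDerivAt_D f x).mul (hasDerivAt_D g x))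
      exact this.congr_deriv (by simp only [Pi.mul_apply]; ring))
    (hA.add hBC) (integrable_bdd_mul ψ f g)
  rw [integral_add hA hBC, integral_add hB hC] at h
  simp only [weightedForm_apply]
  linarith

end Virial

open Virial in
/-- Virial identity for `K(t) = ∫ φ' u η_x` along the abcd Boussinesq flow:
with `p = ∂_t η`, `q = ∂_t u` determined by the system, and canonical variables
`U, N, P, Q` of `u, η, uη, u²`. -/
theorem stmt_16 (a c : ℝ) (u η p q U N P Q : 𝓢(ℝ, ℝ))
    (hp : ∀ x, p x - deriv (deriv (p : ℝ → ℝ)) x =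
      -(a * deriv (deriv (deriv (u : ℝ → ℝ))) x + deriv (u : ℝ → ℝ) x
        + deriv (fun y => u y * η y) x))
    (hq : ∀ x, q x - deriv (deriv (q : ℝ → ℝ)) x =
      -(c * deriv (deriv (deriv (η : ℝ → ℝ))) x + deriv (η : ℝ → ℝ) x
        + u x * deriv (u : ℝ → ℝ) x))
    (hU : ∀ x, U x - deriv (deriv (U : ℝ → ℝ)) x = u x)
    (hN : ∀ x, N x - deriv (deriv (N : ℝ → ℝ)) x = η x)
    (hP : ∀ x, P x - deriv (deriv (P : ℝ → ℝ)) x = u x * η x)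
    (hQ : ∀ x, Q x - deriv (deriv (Q : ℝ → ℝ)) x = (u x)^2)
    (φ : ℝ → ℝ) (hφ : ContDiff ℝ (⊤ : ℕ∞) φ)
    (hbd : ∀ n : ℕ, ∃ C : ℝ, ∀ x : ℝ, |iteratedDeriv n φ x| ≤ C) :
    (∫ x : ℝ, deriv φ x * (q x * deriv (η : ℝ → ℝ) x + u x * deriv (p : ℝ → ℝ) x))
    = -(1 + c) * (∫ x : ℝ, deriv φ x * (η x)^2)
      + c * (∫ x : ℝ, deriv φ x * (deriv (η : ℝ → ℝ) x)^2)
      + (1 + a) * (∫ x : ℝ, deriv φ x * (u x)^2)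
      - a * (∫ x : ℝ, deriv φ x * (deriv (u : ℝ → ℝ) x)^2)
      + (1 + c) * (∫ x : ℝ, deriv φ x * (η x * N x))
      - (1 + a) * (∫ x : ℝ, deriv φ x * (u x * U x))
      + (1 + c) * (∫ x : ℝ, deriv (deriv φ) x * (η x * deriv (N : ℝ → ℝ) x))
      + (a/2) * (∫ x : ℝ, deriv (deriv (deriv φ)) x * (u x)^2)
      - (∫ x : ℝ, deriv φ x * (u x * P x))
      + (1/2) * (∫ x : ℝ, deriv φ x * (η x * Q x))
      + (1/2) * (∫ x : ℝ, deriv φ x * ((u x)^2 * η x))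
      + (1/2) * (∫ x : ℝ, deriv (deriv φ) x * (η x * deriv (Q : ℝ → ℝ) x)) := by
  -- the weights `φ', φ'', φ'''` as bounded continuous functions
  have hw (n : ℕ) : ∃ ψ : ℝ →ᵇ ℝ, ∀ x, ψ x = iteratedDeriv n φ x := by
    obtain ⟨C, hC⟩ := hbd n
    exact ⟨.ofNormedAddCommGroup _ (hφ.continuous_iteratedDeriv n (by exact_mod_cast le_top)) C hC,
      fun _ => rfl⟩
  choose ψ hψ using hw
  have hψd (n : ℕ) (x : ℝ) : HasDerivAt (ψ n) (ψ (n + 1) x) x := by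
    have h := (hφ.differentiable_iteratedDeriv n (by exact_mod_cast WithTop.coe_lt_top n) x)
    rw [show (ψ n : ℝ → ℝ) = iteratedDeriv n φ from funext (hψ n), hψ, iteratedDeriv_succ]
    exact h.hasDerivAt
  have e1 : deriv φ = ψ 1 := by ext x; rw [hψ, iteratedDeriv_one]
  have e2 : deriv (ψ 1) = ψ 2 := funext fun x => (hψd 1 x).deriv
  have e3 : deriv (ψ 2) = ψ 3 := funext fun x => (hψd 2 x).deriv
  simp only [e1, e2, e3]
  -- products of Schwartz functions, realised as Schwartz functions through `P` and `Q`
  have hPf : (fun y => u y * η y) = (P - D (D P) : 𝓢(ℝ, ℝ)) := by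
    ext x; simp only [← hP, deriv_eq_D, sub_apply]
  have hQf : (fun y => (u y) ^ 2) = (Q - D (D Q) : 𝓢(ℝ, ℝ)) := by
    ext x; simp only [← hQ, deriv_eq_D, sub_apply]
  have hQ' (x : ℝ) : u x * D u x = (1 / 2) * D (Q - D (D Q)) x := by
    have h := ((hasDerivAt_D u x).fun_pow 2).deriv
    have h2 : deriv (fun y => (u y) ^ 2) x = D (Q - D (D Q)) x := by rw [hQf, deriv_eq_D]
    have h3 : deriv (fun y => (u y) ^ 2) x = 2 * u x * D u x := by
      rw [h]; norm_num
    linarith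
  simp only [hPf, deriv_eq_D] at hp
  simp only [deriv_eq_D, hQ'] at hq
  have hU' : U - D (D U) = u := by ext x; simpa only [deriv_eq_D, sub_apply] using hU x
  have hN' : N - D (D N) = η := by ext x; simpa only [deriv_eq_D, sub_apply] using hN x
  have hp' : p = a • D u - (1 + a) • D U - D P := by
    apply eq_of_sub_D_D
    have h : p - D (D p) = -(a • D (D (D u)) + D u + D (P - D (D P))) := by
      ext x; simpa using hp x
    have hDU : D u = D U - D (D (D U)) := by rw [← map_sub, hU']
    rw [h]
    simp only [map_sub, map_smul]
    linear_combination (norm := module) (-(1 + a)) • hDU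
  have hq' : q = c • D η - (1 + c) • D N - (1 / 2 : ℝ) • D Q := by
    apply eq_of_sub_D_D
    have h : q - D (D q) = -(c • D (D (D η)) + D η + (1 / 2 : ℝ) • D (Q - D (D Q))) := by
      ext x; simpa using hq x
    have hDN : D η = D N - D (D (D N)) := by rw [← map_sub, hN']
    rw [h]
    simp only [map_sub, map_smul]
    linear_combination (norm := module) (-(1 + c)) • hDN
  have hDU : D (D U) = U - u := by rw [← hU']; abel
  have hDN : D (D N) = N - η := by rw [← hN']; abel
  -- every integral in the identity is a value of the weighted form
  have hL : (∫ x, ψ 1 x * (q x * D η x + u x * D p x))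
      = weightedForm (ψ 1) (D η) q + weightedForm (ψ 1) u (D p) := by
    rw [weightedForm_comm (ψ 1) (D η) q, weightedForm_apply, weightedForm_apply,
      ← integral_add (integrable_bdd_mul _ _ _) (integrable_bdd_mul _ _ _)]
    simp only [mul_add]
  have hsq (n : ℕ) (f : 𝓢(ℝ, ℝ)) : (∫ x, ψ n x * (f x) ^ 2) = weightedForm (ψ n) f f := by
    simp only [weightedForm_apply, sq]
  have hcub₁ : (∫ x, ψ 1 x * ((u x) ^ 2 * η x)) = weightedForm (ψ 1) u (P - D (D P)) := by
    simp only [weightedForm_apply, ← congrFun hPf _, sq, mul_assoc]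
  have hcub₂ : (∫ x, ψ 1 x * ((u x) ^ 2 * η x)) = weightedForm (ψ 1) η (Q - D (D Q)) := by
    simp only [weightedForm_apply, ← congrFun hQf _, mul_comm (η _)]
  have hcub := hcub₁.symm.trans hcub₂
  simp only [deriv_eq_D, hL, hsq, hcub₁, ← weightedForm_apply]
  -- one integration by parts for each term
  have i1 := weightedForm_D (hψd 1) (D N) η
  have i2 := weightedForm_D (hψd 1) (D Q) η
  have i3 := weightedForm_D (hψd 1) u (D u)
  have i4 := weightedForm_D (hψd 2) u u
  simp only [Nat.reduceAdd, weightedForm_comm _ _ η, weightedForm_comm _ (D u) u, hDN, map_sub]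
    at i1 i2 i3 i4 hcub
  rw [weightedForm_comm (ψ 1) (D N)] at i1
  rw [weightedForm_comm (ψ 1) (D Q)] at i2
  rw [hp', hq']
  simp only [map_sub, map_smul, smul_eq_mul, hDU]
  linear_combination (-(1 + c)) * i1 - 1 / 2 * i2 + a * i3 - a / 2 * i4 + 1 / 2 * hcub
end

section
/- Let a, c, α, β ∈ ℝ, let f, g : ℝ → ℝ be Schwartz functions, set u := f − f'' and η := g − g'', and let φ : ℝ → ℝ be a smooth function all of whose derivatives (including φ itself) are bounded. Then ((1+c)(α−β−1) + 1/2) ∫ φ' η² + c(β−α−1/2) ∫ φ' (η')² + ((1+a)(β−α−1) + 1/2) ∫ φ' u² + a(α−β−1/2) ∫ φ' (u')² + (1+c)(β−α+1) ∫ φ' η g + (1+a)(α−β+1) ∫ φ' u f = ∫ φ' ((1/2) f² + (β−α−3a/2)(f')² + ((1−a)(β−α)−2a−1/2)(f'')² + a(α−β−1/2)(f''')²) + ∫ φ' ((1/2) g² + (α−β−3c/2)(g')² + ((1−c)(α−β)−2c−1/2)(g'')² + c(β−α−1/2)(g''')²) + ∫ φ''' ((−(1/2)(1+a)(β−α−1)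 − 1/2) f² − a(α−β−1/2)(f')² + (−(1/2)(1+c)(α−β−1) − 1/2) g² − c(β−α−1/2)(g')²). -/
/-!
Expanding `u = f - f''` turns the left-hand side into integrals of `φ' * f⁽ⁱ⁾ * f⁽ʲ⁾`. The only cross
terms are `φ' h h''` with `h = f` or `h = f'`, and since `φ' h h' - φ'' h² / 2` vanishes at infinity,
`∫ φ' h h'' = -∫ φ' (h')² + (1/2) ∫ φ''' h²` (`integral_mul_cross`). This gives each of `∫ φ' u²`,
`∫ φ' (u')²`, `∫ φ' u f` in terms of squares (`integral_sq_sub`, `integral_sub_mul`); the theorem is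
then a comparison of coefficients, separately for `f` and `g`.
-/

open MeasureTheory SchwartzMap

/-- A continuous bounded weight times two Schwartz functions is integrable. -/
lemma integrable_weight_mul {w : ℝ → ℝ} (hw : Continuous w) (hb : ∃ C : ℝ, ∀ x, |w x| ≤ C)
    (h k : 𝓢(ℝ, ℝ)) : Integrable (fun x => w x * (h x * k x)) := by
  obtain ⟨C, hC⟩ := hb
  obtain ⟨D, hD⟩ : ∃ D : ℝ, ∀ x, ‖h x‖ ≤ D :=
    ⟨_, fun x => SchwartzMap.norm_le_seminorm ℝ h x⟩
  have h1 : Integrable (fun x => h x * k x) :=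
    k.integrable.bdd_mul h.continuous.aestronglyMeasurable (Filter.Eventually.of_forall hD)
  exact h1.bdd_mul hw.aestronglyMeasurable (Filter.Eventually.of_forall hC)

lemma integrable_weight_sq {w : ℝ → ℝ} (hw : Continuous w) (hb : ∃ C : ℝ, ∀ x, |w x| ≤ C)
    (h : 𝓢(ℝ, ℝ)) : Integrable (fun x => w x * (h x) ^ 2) := by
  simpa only [sq] using integrable_weight_mul hw hb h h

/-- Integration by parts of the cross term: the integrand
`w (h')² + w h h'' - w'' h² / 2` is the derivative of `w h h' - w' h² / 2`. -/
lemma integral_mul_cross {w w1 w2 : ℝ → ℝ} (hw : ∀ x, HasDerivAt w (w1 x) x)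
    (hw1 : ∀ x, HasDerivAt w1 (w2 x) x) (hw2 : Continuous w2)
    (b : ∃ C : ℝ, ∀ x, |w x| ≤ C) (b1 : ∃ C : ℝ, ∀ x, |w1 x| ≤ C)
    (b2 : ∃ C : ℝ, ∀ x, |w2 x| ≤ C) {h h1 h2 : 𝓢(ℝ, ℝ)}
    (d : ∀ x, HasDerivAt h (h1 x) x) (d1 : ∀ x, HasDerivAt h1 (h2 x) x) :
    ∫ x, w x * (h x * h2 x) = -(∫ x, w x * (h1 x) ^ 2) + 1 / 2 * ∫ x, w2 x * (h x) ^ 2 := by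
  have cw : Continuous w := continuous_iff_continuousAt.2 fun x => (hw x).continuousAt
  have cw1 : Continuous w1 := continuous_iff_continuousAt.2 fun x => (hw1 x).continuousAt
  have i1 := integrable_weight_mul cw b h h2
  have i2 := integrable_weight_sq cw b h1
  have i3 := (integrable_weight_sq hw2 b2 h).const_mul (1 / 2)
  have i4 := integrable_weight_mul cw b h h1
  have i5 := (integrable_weight_sq cw1 b1 h).const_mul (1 / 2)
  have i12 : Integrable (fun x => w x * (h x * h2 x) + w x * (h1 x) ^ 2) := i1.add i2
  have key := integral_eq_zero_of_hasDerivAt_of_integrable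
    (f := fun x => w x * (h x * h1 x) - 1 / 2 * (w1 x * (h x) ^ 2))
    (f' := fun x => w x * (h x * h2 x) + w x * (h1 x) ^ 2 - 1 / 2 * (w2 x * (h x) ^ 2))
    (fun x => by
      refine (((hw x).mul ((d x).mul (d1 x))).sub
        (((hw1 x).mul ((d x).pow 2)).const_mul (1 / 2))).congr_deriv ?_
      simp only [Pi.mul_apply, Pi.pow_apply, Nat.cast_ofNat]
      ring) (i12.sub i3) (i4.sub i5)
  rw [integral_sub i12 i3, integral_add i1 i2, integral_const_mul] at key
  linarith

lemma integral_sq_sub {w w1 w2 : ℝ → ℝ} (hw : ∀ x, HasDerivAt w (w1 x) x)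
    (hw1 : ∀ x, HasDerivAt w1 (w2 x) x) (hw2 : Continuous w2)
    (b : ∃ C : ℝ, ∀ x, |w x| ≤ C) (b1 : ∃ C : ℝ, ∀ x, |w1 x| ≤ C)
    (b2 : ∃ C : ℝ, ∀ x, |w2 x| ≤ C) {h h1 h2 : 𝓢(ℝ, ℝ)}
    (d : ∀ x, HasDerivAt h (h1 x) x) (d1 : ∀ x, HasDerivAt h1 (h2 x) x) :
    ∫ x, w x * (h x - h2 x) ^ 2 = (∫ x, w x * (h x) ^ 2) + 2 * (∫ x, w x * (h1 x) ^ 2)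
      + (∫ x, w x * (h2 x) ^ 2) - ∫ x, w2 x * (h x) ^ 2 := by
  have cw : Continuous w := continuous_iff_continuousAt.2 fun x => (hw x).continuousAt
  have e : (fun x => w x * (h x - h2 x) ^ 2) =
      fun x => w x * (h x) ^ 2 - 2 * (w x * (h x * h2 x)) + w x * (h2 x) ^ 2 := by
    ext x; ring
  have i0 := integrable_weight_sq cw b h
  have i1 := (integrable_weight_mul cw b h h2).const_mul 2
  have i2 := integrable_weight_sq cw b h2
  have i01 : Integrable (fun x => w x * (h x) ^ 2 - 2 * (w x * (h x * h2 x))) := i0.sub i1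
  rw [e, integral_add i01 i2, integral_sub i0 i1, integral_const_mul,
    integral_mul_cross hw hw1 hw2 b b1 b2 d d1]
  ring

lemma integral_sub_mul {w w1 w2 : ℝ → ℝ} (hw : ∀ x, HasDerivAt w (w1 x) x)
    (hw1 : ∀ x, HasDerivAt w1 (w2 x) x) (hw2 : Continuous w2)
    (b : ∃ C : ℝ, ∀ x, |w x| ≤ C) (b1 : ∃ C : ℝ, ∀ x, |w1 x| ≤ C)
    (b2 : ∃ C : ℝ, ∀ x, |w2 x| ≤ C) {h h1 h2 : 𝓢(ℝ, ℝ)}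
    (d : ∀ x, HasDerivAt h (h1 x) x) (d1 : ∀ x, HasDerivAt h1 (h2 x) x) :
    ∫ x, w x * ((h x - h2 x) * h x) = (∫ x, w x * (h x) ^ 2) + (∫ x, w x * (h1 x) ^ 2)
      - 1 / 2 * ∫ x, w2 x * (h x) ^ 2 := by
  have cw : Continuous w := continuous_iff_continuousAt.2 fun x => (hw x).continuousAt
  have e : (fun x => w x * ((h x - h2 x) * h x)) =
      fun x => w x * (h x) ^ 2 - w x * (h x * h2 x) := by
    ext x; ring
  rw [e, integral_sub (integrable_weight_sq cw b h) (integrable_weight_mul cw b h h2),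
    integral_mul_cross hw hw1 hw2 b b1 b2 d d1]
  ring

/-- A weighted linear combination of four squares integrates term by term. -/
lemma integral_four_sq {w : ℝ → ℝ} (cw : Continuous w) (b : ∃ C : ℝ, ∀ x, |w x| ≤ C)
    (h0 h1 h2 h3 : 𝓢(ℝ, ℝ)) (p q r s : ℝ) :
    ∫ x, w x * (p * (h0 x) ^ 2 + q * (h1 x) ^ 2 + r * (h2 x) ^ 2 + s * (h3 x) ^ 2) =
      p * (∫ x, w x * (h0 x) ^ 2) + q * (∫ x, w x * (h1 x) ^ 2)
        + r * (∫ x, w x * (h2 x) ^ 2) + s * ∫ x, w x * (h3 x) ^ 2 := by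
  have e : (fun x => w x * (p * (h0 x) ^ 2 + q * (h1 x) ^ 2 + r * (h2 x) ^ 2 + s * (h3 x) ^ 2)) =
      fun x => p * (w x * (h0 x) ^ 2) + q * (w x * (h1 x) ^ 2) + r * (w x * (h2 x) ^ 2)
        + s * (w x * (h3 x) ^ 2) := by
    ext x; ring
  have i0 := (integrable_weight_sq cw b h0).const_mul p
  have i1 := (integrable_weight_sq cw b h1).const_mul q
  have i2 := (integrable_weight_sq cw b h2).const_mul r
  have i3 := (integrable_weight_sq cw b h3).const_mul s
  have i01 : Integrable (fun x => p * (w x * (h0 x) ^ 2) + q * (w x * (h1 x) ^ 2)) := i0.add i1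
  have i012 : Integrable (fun x => p * (w x * (h0 x) ^ 2) + q * (w x * (h1 x) ^ 2)
      + r * (w x * (h2 x) ^ 2)) := i01.add i2
  rw [e, integral_add i012 i3, integral_add i01 i2, integral_add i0 i1]
  simp only [integral_const_mul]

/-- The first three derivatives of a Schwartz function, as Schwartz functions. -/
lemma exists_schwartz_derivs (f : 𝓢(ℝ, ℝ)) : ∃ f1 f2 f3 : 𝓢(ℝ, ℝ),
    (∀ x, HasDerivAt f (f1 x) x) ∧ (∀ x, HasDerivAt f1 (f2 x) x) ∧
      (∀ x, HasDerivAt f2 (f3 x) x) := by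
  have key : ∀ (h : 𝓢(ℝ, ℝ)) (x : ℝ), HasDerivAt h (SchwartzMap.derivCLM ℝ ℝ h x) x :=
    fun h x => h.differentiableAt.hasDerivAt
  exact ⟨_, _, _, key _, key _, key _⟩

/-- Rewriting of the quadratic form `Q(t)` of the modified virial `I + αJ + βK` in the
canonical variables `f = (1-∂²)⁻¹u`, `g = (1-∂²)⁻¹η`. -/
theorem stmt_17 (a c α β : ℝ) (f g : 𝓢(ℝ, ℝ))
    (u η : ℝ → ℝ)
    (hu : ∀ x, u x = f x - deriv (deriv (f : ℝ → ℝ)) x)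
    (hη : ∀ x, η x = g x - deriv (deriv (g : ℝ → ℝ)) x)
    (φ : ℝ → ℝ) (hφ : ContDiff ℝ (⊤ : ℕ∞) φ)
    (hbd : ∀ n : ℕ, ∃ C : ℝ, ∀ x : ℝ, |iteratedDeriv n φ x| ≤ C) :
    ((1 + c)*(α - β - 1) + 1/2) * (∫ x : ℝ, deriv φ x * (η x)^2)
      + c*(β - α - 1/2) * (∫ x : ℝ, deriv φ x * (deriv η x)^2)
      + ((1 + a)*(β - α - 1) + 1/2) * (∫ x : ℝ, deriv φ x * (u x)^2)
      + a*(α - β - 1/2) * (∫ x : ℝ, deriv φ x * (deriv u x)^2)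
      + (1 + c)*(β - α + 1) * (∫ x : ℝ, deriv φ x * (η x * g x))
      + (1 + a)*(α - β + 1) * (∫ x : ℝ, deriv φ x * (u x * f x))
    = (∫ x : ℝ, deriv φ x * ((1/2) * (f x)^2
          + (β - α - 3*a/2) * (deriv (f : ℝ → ℝ) x)^2
          + ((1 - a)*(β - α) - 2*a - 1/2) * (deriv (deriv (f : ℝ → ℝ)) x)^2
          + a*(α - β - 1/2) * (deriv (deriv (deriv (f : ℝ → ℝ))) x)^2))
      + (∫ x : ℝ, deriv φ x * ((1/2) * (g x)^2
          + (α - β - 3*c/2) * (deriv (g : ℝ → ℝ) x)^2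
          + ((1 - c)*(α - β) - 2*c - 1/2) * (deriv (deriv (g : ℝ → ℝ)) x)^2
          + c*(β - α - 1/2) * (deriv (deriv (deriv (g : ℝ → ℝ))) x)^2))
      + (∫ x : ℝ, deriv (deriv (deriv φ)) x *
          ((-(1/2)*(1 + a)*(β - α - 1) - 1/2) * (f x)^2
            - a*(α - β - 1/2) * (deriv (f : ℝ → ℝ) x)^2
            + (-(1/2)*(1 + c)*(α - β - 1) - 1/2) * (g x)^2
            - c*(β - α - 1/2) * (deriv (g : ℝ → ℝ) x)^2)) := by
  obtain ⟨f1, f2, f3, df, df1, df2⟩ := exists_schwartz_derivs f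
  obtain ⟨g1, g2, g3, dg, dg1, dg2⟩ := exists_schwartz_derivs g
  have ef1 : deriv (f : ℝ → ℝ) = f1 := funext fun x => (df x).deriv
  have ef2 : deriv (f1 : ℝ → ℝ) = f2 := funext fun x => (df1 x).deriv
  have ef3 : deriv (f2 : ℝ → ℝ) = f3 := funext fun x => (df2 x).deriv
  have eg1 : deriv (g : ℝ → ℝ) = g1 := funext fun x => (dg x).deriv
  have eg2 : deriv (g1 : ℝ → ℝ) = g2 := funext fun x => (dg1 x).deriv
  have eg3 : deriv (g2 : ℝ → ℝ) = g3 := funext fun x => (dg2 x).deriv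
  simp only [ef1, ef2, ef3, eg1, eg2, eg3] at hu hη ⊢
  obtain rfl : u = fun x => f x - f2 x := funext hu
  obtain rfl : η = fun x => g x - g2 x := funext hη
  have eu : deriv (fun x => f x - f2 x) = fun x => f1 x - f3 x :=
    funext fun x => ((df x).sub (df2 x)).deriv
  have eη : deriv (fun x => g x - g2 x) = fun x => g1 x - g3 x :=
    funext fun x => ((dg x).sub (dg2 x)).deriv
  have c1 : ContDiff ℝ (⊤ : ℕ∞) (deriv φ) := (contDiff_infty_iff_deriv.1 hφ).2
  have c2 : ContDiff ℝ (⊤ : ℕ∞) (deriv (deriv φ)) := (contDiff_infty_iff_deriv.1 c1).2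
  have c3 : ContDiff ℝ (⊤ : ℕ∞) (deriv (deriv (deriv φ))) := (contDiff_infty_iff_deriv.1 c2).2
  have b1 : ∃ C : ℝ, ∀ x, |deriv φ x| ≤ C := by
    simpa [iteratedDeriv_succ] using hbd 1
  have b2 : ∃ C : ℝ, ∀ x, |deriv (deriv φ) x| ≤ C := by
    simpa [iteratedDeriv_succ] using hbd 2
  have b3 : ∃ C : ℝ, ∀ x, |deriv (deriv (deriv φ)) x| ≤ C := by
    simpa [iteratedDeriv_succ] using hbd 3
  have d1 : ∀ x, HasDerivAt (deriv φ) (deriv (deriv φ) x) x := fun x =>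
    ((contDiff_infty_iff_deriv.1 c1).1 x).hasDerivAt
  have d2 : ∀ x, HasDerivAt (deriv (deriv φ)) (deriv (deriv (deriv φ)) x) x := fun x =>
    ((contDiff_infty_iff_deriv.1 c2).1 x).hasDerivAt
  have e3 : (fun x => deriv (deriv (deriv φ)) x *
      ((-(1/2)*(1 + a)*(β - α - 1) - 1/2) * (f x)^2 - a*(α - β - 1/2) * (f1 x)^2
        + (-(1/2)*(1 + c)*(α - β - 1) - 1/2) * (g x)^2 - c*(β - α - 1/2) * (g1 x)^2)) =
      fun x => deriv (deriv (deriv φ)) x *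
      ((-(1/2)*(1 + a)*(β - α - 1) - 1/2) * (f x)^2 + (-(a*(α - β - 1/2))) * (f1 x)^2
        + (-(1/2)*(1 + c)*(α - β - 1) - 1/2) * (g x)^2 + (-(c*(β - α - 1/2))) * (g1 x)^2) := by
    ext x; ring
  rw [e3, eu, eη, integral_sq_sub d1 d2 c3.continuous b1 b2 b3 df df1,
    integral_sq_sub d1 d2 c3.continuous b1 b2 b3 df1 df2,
    integral_sub_mul d1 d2 c3.continuous b1 b2 b3 df df1,
    integral_sq_sub d1 d2 c3.continuous b1 b2 b3 dg dg1,
    integral_sq_sub d1 d2 c3.continuous b1 b2 b3 dg1 dg2,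
    integral_sub_mul d1 d2 c3.continuous b1 b2 b3 dg dg1,
    integral_four_sq c1.continuous b1, integral_four_sq c1.continuous b1,
    integral_four_sq c3.continuous b3]
  ring
end
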